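/- There is a constant C > 0, depending only on d and Γ, such that for every ξ ∈ ℝ^d: (i) every η ∈ Υ(ξ) satisfies |ξ − η| ≤ C ρ^{α₁} r^{(d−1)d}; (ii) every m ∈ N(ξ) satisfies |m| ≤ C ρ^{α₁} r^{d(d−1)}; and (iii) the cardinality of N(ξ) is at most C ρ^{dα₁} r^{d²(d−1)}. -/

import Mathlib

noncomputable section

open Set Submodule Module MeasureTheory Relation
open scoped RealInnerProductSpace

variable {d : ℕ}

/-- The lattice Γ generated over ℤ by the basis `B` of ℝ^d. -/
def latticeOf (B : Basis (Fin d) ℝ (EuclideanSpace ℝ (Fin d))) :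
    Submodule ℤ (EuclideanSpace ℝ (Fin d)) :=
  Submodule.span ℤ (Set.range B)

/-- The determinant d(Γ) of the lattice generated by `B`. -/
def latDet (B : Basis (Fin d) ℝ (EuclideanSpace ℝ (Fin d))) : ℝ :=
  |(EuclideanSpace.basisFun (Fin d) ℝ).toBasis.det (fun i => B i)|

/-- The dual lattice Γ† = {θ : θ·g ∈ 2πℤ for all g ∈ Γ}. -/
def dualLattice (B : Basis (Fin d) ℝ (EuclideanSpace ℝ (Fin d))) :
    Set (EuclideanSpace ℝ (Fin d)) :=
  {θ | ∀ g ∈ latticeOf B, ∃ k : ℤ, ⟪θ, g⟫ = 2 * Real.pi * k}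

/-- Θ_r : nonzero dual lattice vectors of norm at most r. -/
def Theta (B : Basis (Fin d) ℝ (EuclideanSpace ℝ (Fin d))) (r : ℝ) :
    Set (EuclideanSpace ℝ (Fin d)) :=
  {θ | θ ∈ dualLattice B ∧ θ ≠ 0 ∧ ‖θ‖ ≤ r}

/-- Θ_r⁰ : dual lattice vectors of norm at most r (including 0). -/
def Theta0 (B : Basis (Fin d) ℝ (EuclideanSpace ℝ (Fin d))) (r : ℝ) :
    Set (EuclideanSpace ℝ (Fin d)) :=
  {θ | θ ∈ dualLattice B ∧ ‖θ‖ ≤ r}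

/-- A lattice r-subspace: a subspace spanned by dual lattice vectors from Θ_r⁰. -/
def IsLatticeSubspace (B : Basis (Fin d) ℝ (EuclideanSpace ℝ (Fin d))) (r : ℝ)
    (V : Submodule ℝ (EuclideanSpace ℝ (Fin d))) : Prop :=
  ∃ S : Set (EuclideanSpace ℝ (Fin d)), S ⊆ Theta0 B r ∧ V = Submodule.span ℝ S

/-- Orthogonal projection ξ_V onto a subspace, viewed in the ambient space. -/
def projV (V : Submodule ℝ (EuclideanSpace ℝ (Fin d))) (ξ : EuclideanSpace ℝ (Fin d)) :
    EuclideanSpace ℝ (Fin d) :=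
  (orthogonalProjection V ξ : EuclideanSpace ℝ (Fin d))

/-- ω_n: the volume of the unit ball in ℝ^n. -/
def unitBallVol (n : ℕ) : ℝ :=
  (MeasureTheory.volume (Metric.ball (0 : EuclideanSpace ℝ (Fin n)) 1)).toReal

/-- The resonant layer Λ(θ) (= ℝ^d when θ = 0). -/
def layer (ρ a : ℝ) (θ : EuclideanSpace ℝ (Fin d)) : Set (EuclideanSpace ℝ (Fin d)) :=
  {ξ | θ = 0 ∨ |⟪ξ, θ⟫| < ρ ^ a * ‖θ‖}

/-- Υ_θ(ξ): the points θ-resonant congruent to ξ. -/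
def upsTheta (ρ a : ℝ) (θ ξ : EuclideanSpace ℝ (Fin d)) : Set (EuclideanSpace ℝ (Fin d)) :=
  {η | ξ ∈ layer ρ a θ ∧ η ∈ layer ρ a θ ∧ ∃ l : ℤ, ξ - η = (l : ℝ) • θ}

/-- One step of resonant congruence (with some θ ∈ Θ_r⁰). -/
def resStep (B : Basis (Fin d) ℝ (EuclideanSpace ℝ (Fin d))) (ρ a r : ℝ)
    (ξ η : EuclideanSpace ℝ (Fin d)) : Prop :=
  ∃ θ ∈ Theta0 B r, η ∈ upsTheta ρ a θ ξ

/-- Υ(ξ): all points resonant congruent to ξ. -/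
def Ups (B : Basis (Fin d) ℝ (EuclideanSpace ℝ (Fin d))) (ρ a r : ℝ)
    (ξ : EuclideanSpace ℝ (Fin d)) : Set (EuclideanSpace ℝ (Fin d)) :=
  {η | Relation.ReflTransGen (resStep B ρ a r) ξ η}

/-- N(ξ) = Υ(ξ) − ξ. -/
def resN (B : Basis (Fin d) ℝ (EuclideanSpace ℝ (Fin d))) (ρ a r : ℝ)
    (ξ : EuclideanSpace ℝ (Fin d)) : Set (EuclideanSpace ℝ (Fin d)) :=
  {m | ξ + m ∈ Ups B ρ a r ξ}

/-- Ξ₁(V) = {ξ : |ξ_V| < ρ^{α_n}}, n = dim V. -/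
def Xi1 (ρ : ℝ) (α : ℕ → ℝ) (V : Submodule ℝ (EuclideanSpace ℝ (Fin d))) :
    Set (EuclideanSpace ℝ (Fin d)) :=
  {ξ | ‖projV V ξ‖ < ρ ^ α (Module.finrank ℝ V)}

/-- Ξ₂(V) = ∪_{ξ ∈ Ξ₁(V)} Υ(ξ). -/
def Xi2 (B : Basis (Fin d) ℝ (EuclideanSpace ℝ (Fin d))) (ρ r : ℝ) (α : ℕ → ℝ)
    (V : Submodule ℝ (EuclideanSpace ℝ (Fin d))) : Set (EuclideanSpace ℝ (Fin d)) :=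
  {η | ∃ ξ ∈ Xi1 ρ α V, η ∈ Ups B ρ (α 1) r ξ}

/-- Ξ(V): Ξ₂(V) minus the Ξ₂(W) for all lattice r-subspaces W of larger dimension. -/
def Xi (B : Basis (Fin d) ℝ (EuclideanSpace ℝ (Fin d))) (ρ r : ℝ) (α : ℕ → ℝ)
    (V : Submodule ℝ (EuclideanSpace ℝ (Fin d))) : Set (EuclideanSpace ℝ (Fin d)) :=
  Xi2 B ρ r α V \
    ⋃ W ∈ {W : Submodule ℝ (EuclideanSpace ℝ (Fin d)) |
        IsLatticeSubspace B r W ∧ Module.finrank ℝ V < Module.finrank ℝ W},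
      Xi2 B ρ r α W

/-- The standing conditions on the parameters ρ ≥ 1, r, κ > 0 and the exponents α_j:
0 = α₀, α_{n+1} > α_n + 2κd², α_d < 1, r ≤ ρ^κ, and r ≥ r₀ (i.e. Θ_r⁰ spans ℝ^d). -/
def GoodParams (B : Basis (Fin d) ℝ (EuclideanSpace ℝ (Fin d))) (ρ r κ : ℝ)
    (α : ℕ → ℝ) : Prop :=
  1 ≤ ρ ∧ 0 < κ ∧ α 0 = 0 ∧ (∀ n < d, α n + 2 * κ * (d : ℝ) ^ 2 < α (n + 1)) ∧
    α d < 1 ∧ r ≤ ρ ^ κ ∧ Submodule.span ℝ (Theta0 B r) = ⊤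

/-!
Fix `S = Θ_r⁰` and let `x` be resonant congruent to `y`. Arguing by induction on `dim span S`, let
`D` bound the diameter of the resonance classes generated by subsets of `S` of smaller span. Let
`G ⊆ S` be the set of vectors in whose layer, thickened by `D`, the point `x` lies.

* If `span G ≠ span S`, the class of `x` under `G` has diameter at most `D`, hence meets no layer of
  a vector in `S \ G`. So it is the whole class of `x`, and `|x - y| ≤ D`.
* If `span G = span S`, then `x` is nearly orthogonal to a spanning set of directions. A set of
  lattice vectors of length at most `r` cannot be too close to linearly dependent: expanding in a
  basis drawn from it by Cramer's rule, the denominators are determinants of integer matrices, so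
  at least `1` in absolute value. Hence `x` has small projection to `span S`, with a loss of at most
  a constant times `r ^ d`. The same holds for `y`, and `x - y ∈ span S`.

Each dimension after the first costs one factor `r ^ d`, which gives the exponent `d (d - 1)`. The
cardinality of `N(ξ)` is then at most the number of dual lattice points in a ball.
-/

section LinearAlgebra

variable {ι : Type*}

theorem exists_basis_range_subset_span_eq {K V : Type*} [DivisionRing K] [AddCommGroup V]
    [Module K V] {T G : Set V} (hT : span K T = ⊤) (hG : G ⊆ T) :
    ∃ (s : Set V) (b : Basis s K V), range b ⊆ T ∧ span K G = span K (b '' {j | b j ∈ G}) := by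
  obtain ⟨u, huG, hspan, hu⟩ := exists_linearIndependent K G
  have hu : LinearIndepOn K id u := hu
  refine ⟨_, Basis.extendLe hu (huG.trans hG) hT.ge, Basis.extendLe_subset _ _ _, ?_⟩
  refine le_antisymm (hspan ▸ span_mono fun θ hθ => ?_) (span_mono (image_subset_iff.2 subset_rfl))
  obtain ⟨j, rfl⟩ := Basis.subset_extendLe hu (huG.trans hG) hT.ge hθ
  exact mem_image_of_mem _ (huG hθ)

theorem det_update_eq_det_mul_repr {R M : Type*} [CommRing R] [AddCommGroup M] [Module R M]
    [Fintype ι] [DecidableEq ι] (D b : Basis ι R M) (v : M) (i : ι) :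
    D.det (Function.update b i v) = D.det b * b.repr v i := by
  have hmk : Basis.mk b.linearIndependent b.span_eq.ge = b :=
    Basis.eq_of_apply_eq fun j => Basis.mk_apply _ _ j
  have h := LinearMap.congr_fun
    (D.det_smul_mk_coord_eq_det_update b.linearIndependent b.span_eq.ge i) v
  rw [hmk] at h
  exact h.symm

variable {R M : Type*} [CommRing R] [LinearOrder R] [IsStrictOrderedRing R] [AddCommGroup M]
  [Module R M]

theorem one_le_abs_det_of_mem_span_int [DecidableEq ι] [Fintype ι] (D b : Basis ι R M)
    (hb : ∀ j, b j ∈ span ℤ (range D)) : 1 ≤ |D.det b| := by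
  choose k hk using fun j => (D.mem_span_iff_repr_mem ℤ (b j)).1 (hb j)
  have hdet : D.det b = (Matrix.det (Matrix.of fun i j => k j i) : ℤ) := by
    rw [Int.cast_det, Basis.det_apply]
    congr 1
    ext i j
    exact (hk j i).symm
  have hne := (D.isUnit_det b).ne_zero
  rw [hdet] at hne ⊢
  exact_mod_cast Int.one_le_abs (Int.cast_ne_zero.1 hne)

theorem mem_image_box_of_mem_span_int [Fintype ι] (D : Basis ι R M) {m : M}
    (hm : m ∈ span ℤ (range D)) {n : ℕ} (hn : ∀ i, |D.repr m i| < n + 1) :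
    m ∈ (fun c : ι → ℤ => ∑ i, c i • D i) '' Icc (fun _ => -n) (fun _ => n) := by
  classical
  obtain ⟨c, rfl⟩ := (mem_span_range_iff_exists_fun ℤ).1 hm
  have hc : ∀ i, |c i| ≤ n := fun i => by
    have hrepr : D.repr (∑ j, c j • D j) i = c i := by
      simp [Finsupp.single_apply, ← Int.cast_smul_eq_zsmul R]
    have hlt : |(c i : R)| < n + 1 := hrepr ▸ hn i
    exact Int.lt_add_one_iff.1 (by exact_mod_cast hlt)
  exact ⟨c, ⟨fun i => (abs_le.1 (hc i)).1, fun i => (abs_le.1 (hc i)).2⟩, rfl⟩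

end LinearAlgebra

section LatticeBases

variable {ι E : Type*} [Fintype ι] [NormedAddCommGroup E] [NormedSpace ℝ E]
  (D : Basis ι ℝ E)

theorem exists_abs_det_le [DecidableEq ι] :
    ∃ K, 0 < K ∧ ∀ w : ι → E, |D.det w| ≤ K * ∏ i, ‖w i‖ := by
  have := D.finiteDimensional_of_finite
  refine D.det.exists_bound_of_continuous ?_
  refine Continuous.matrix_det (continuous_matrix fun i j => ?_)
  exact (D.coord i).continuous_of_finiteDimensional.comp (continuous_apply j)

theorem exists_norm_repr_smul_le :
    ∃ K, 0 < K ∧ ∀ (r : ℝ) (b : Basis ι ℝ E), (∀ j, b j ∈ span ℤ (range D)) →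
      (∀ j, ‖b j‖ ≤ r) → ∀ v i, ‖b.repr v i • b i‖ ≤ K * r ^ Fintype.card ι * ‖v‖ := by
  classical
  obtain ⟨K, hK, hdet⟩ := exists_abs_det_le D
  refine ⟨K, hK, fun r b hb hr v i => ?_⟩
  have hrepr : |b.repr v i| ≤ K * ∏ j, ‖Function.update b i v j‖ :=
    calc |b.repr v i| ≤ |D.det b| * |b.repr v i| :=
          le_mul_of_one_le_left (abs_nonneg _) (one_le_abs_det_of_mem_span_int D b hb)
      _ = |D.det (Function.update b i v)| := by rw [det_update_eq_det_mul_repr, abs_mul]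
      _ ≤ _ := hdet _
  have hprod : ∏ j, ‖Function.update b i v j‖ = ‖v‖ * ∏ j ∈ {i}ᶜ, ‖b j‖ := by
    rw [Fintype.prod_eq_mul_prod_compl i, Function.update_self]
    congr 1
    refine Finset.prod_congr rfl fun j hj => ?_
    rw [Function.update_of_ne (by simpa using hj)]
  calc ‖b.repr v i • b i‖ = |b.repr v i| * ‖b i‖ := norm_smul _ _
    _ ≤ K * (‖v‖ * ∏ j ∈ {i}ᶜ, ‖b j‖) * ‖b i‖ := by
        rw [← hprod]
        gcongr
    _ = K * (∏ j, ‖b j‖) * ‖v‖ := by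
        rw [Fintype.prod_eq_mul_prod_compl i]
        ring
    _ ≤ K * r ^ Fintype.card ι * ‖v‖ := by
        gcongr
        exact (Finset.prod_le_prod (fun j _ => norm_nonneg _) fun j _ => hr j).trans_eq
          (Finset.prod_const r)

theorem abs_repr_le_norm_equivFunL (x : E) (i : ι) :
    |D.repr x i| ≤ ‖(D.equivFunL : E →L[ℝ] ι → ℝ)‖ * ‖x‖ :=
  (norm_le_pi_norm (D.equivFunL x) i).trans ((D.equivFunL : E →L[ℝ] ι → ℝ).le_opNorm x)

theorem exists_ncard_le_of_subset_span_int :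
    ∃ K : ℝ, ∀ R : ℝ, 1 ≤ R → ∀ N : Set E, (∀ m ∈ N, m ∈ span ℤ (range D)) →
      (∀ m ∈ N, ‖m‖ ≤ R) → N.Finite ∧ (N.ncard : ℝ) ≤ K * R ^ Fintype.card ι := by
  classical
  let M : ℝ := ‖(D.equivFunL : E →L[ℝ] ι → ℝ)‖
  refine ⟨(2 * M + 1) ^ Fintype.card ι, fun R hR N hN hNR => ?_⟩
  let n : ℕ := ⌊M * R⌋₊
  let box : Finset (ι → ℤ) := Finset.Icc (fun _ => -n) (fun _ => n)
  have hcover : N ⊆ (fun c : ι → ℤ => ∑ i, c i • D i) '' box := fun m hm => by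
    rw [Finset.coe_Icc]
    refine mem_image_box_of_mem_span_int D (hN m hm) fun i => ?_
    calc |D.repr m i| ≤ M * ‖m‖ := abs_repr_le_norm_equivFunL D m i
      _ ≤ M * R := by gcongr; exact hNR m hm
      _ < n + 1 := Nat.lt_floor_add_one _
  have hbox : box.card = (2 * n + 1) ^ Fintype.card ι := by
    simp only [box, Pi.card_Icc, Int.card_Icc, Finset.prod_const, Finset.card_univ]
    congr
    omega
  have hfin := box.finite_toSet.image (fun c : ι → ℤ => ∑ i, c i • D i)
  refine ⟨hfin.subset hcover, ?_⟩
  calc (N.ncard : ℝ) ≤ box.card := by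
        rw [← ncard_coe_finset]
        exact_mod_cast (ncard_le_ncard hcover hfin).trans ncard_image_le
    _ = (2 * n + 1) ^ Fintype.card ι := by rw [hbox]; norm_cast
    _ ≤ ((2 * M + 1) * R) ^ Fintype.card ι := by
        gcongr
        linarith [Nat.floor_le (show 0 ≤ M * R by positivity)]
    _ = _ := mul_pow _ _ _

end LatticeBases

section SpanConstant

variable {E : Type*} [NormedAddCommGroup E] [InnerProductSpace ℝ E]
  {S T G : Set E} {F : ℝ} {θ : E}

/-- A set `T` has span constant `F` if a bound `|x·θ| ≤ ε|θ|` on any subset of `T` extends to the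
linear span of that subset with `ε` replaced by `Fε`. This quantifies how far the directions in
`T` are from being nearly linearly dependent. -/
def HasSpanConstant (T : Set E) (F : ℝ) : Prop :=
  ∀ G ⊆ T, ∀ (x : E) (ε : ℝ), 0 ≤ ε → (∀ θ ∈ G, |⟪x, θ⟫| ≤ ε * ‖θ‖) →
    ∀ v ∈ span ℝ G, |⟪x, v⟫| ≤ F * ε * ‖v‖

namespace HasSpanConstant

theorem mono (hT : HasSpanConstant T F) (hS : S ⊆ T) : HasSpanConstant S F :=
  fun G hG => hT G (hG.trans hS)

theorem one_le (hT : HasSpanConstant T F) (hθ : θ ∈ T) (hθ0 : θ ≠ 0) : 1 ≤ F := by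
  have hpos : 0 < ‖θ‖ := norm_pos_iff.2 hθ0
  have h := hT {θ} (singleton_subset_iff.2 hθ) θ ‖θ‖ hpos.le
    (fun φ hφ => hφ ▸ abs_real_inner_le_norm θ φ) θ (mem_span_singleton_self θ)
  rw [real_inner_self_eq_norm_mul_norm, abs_of_pos (mul_pos hpos hpos), mul_assoc] at h
  exact le_of_mul_le_mul_right (by rwa [one_mul]) (mul_pos hpos hpos)

theorem of_finrank_span_le_one [FiniteDimensional ℝ E] (hT : finrank ℝ (span ℝ T) ≤ 1) :
    HasSpanConstant T 1 := by
  intro G hG x ε _ hx v hv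
  by_cases hG0 : ∀ θ ∈ G, θ = 0
  · rw [span_eq_bot.2 hG0, mem_bot] at hv
    simp [hv]
  push Not at hG0
  obtain ⟨θ, hθ, hθ0⟩ := hG0
  have hline : ℝ ∙ θ = span ℝ T := by
    refine eq_of_le_of_finrank_le (span_mono (singleton_subset_iff.2 (hG hθ))) ?_
    rwa [finrank_span_singleton hθ0]
  obtain ⟨t, rfl⟩ := mem_span_singleton.1 (hline ▸ span_mono hG hv)
  calc |⟪x, t • θ⟫| = |t| * |⟪x, θ⟫| := by rw [real_inner_smul_right, abs_mul]
    _ ≤ |t| * (ε * ‖θ‖) := by gcongr; exact hx θ hθ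
    _ = 1 * ε * ‖t • θ‖ := by rw [norm_smul, Real.norm_eq_abs]; ring

end HasSpanConstant

theorem exists_hasSpanConstant_of_subset_span_int {ι : Type*} [Fintype ι] [Nonempty ι]
    (D : Basis ι ℝ E) :
    ∃ K, 0 < K ∧ ∀ (r : ℝ) (T : Set E), (∀ θ ∈ T, θ ∈ span ℤ (range D)) → (∀ θ ∈ T, ‖θ‖ ≤ r) →
      span ℝ T = ⊤ → HasSpanConstant T (K * r ^ Fintype.card ι) := by
  obtain ⟨K, hK, hrepr⟩ := exists_norm_repr_smul_le D
  refine ⟨Fintype.card ι * K, by positivity, fun r T hTD hTr hT G hG x ε hε hx v hv => ?_⟩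
  obtain ⟨s, b₀, hb₀T, hb₀G⟩ := exists_basis_range_subset_span_eq hT hG
  let b := b₀.reindex (b₀.indexEquiv D)
  have hbT : ∀ j, b j ∈ T := fun j => hb₀T (by simp [b])
  have hbG : span ℝ G = span ℝ (b '' {j | b j ∈ G}) := by
    rw [hb₀G]
    congr 1
    ext θ
    simp [b, (b₀.indexEquiv D).symm.surjective.exists]
  have hterm : ∀ j, |⟪x, b.repr v j • b j⟫| ≤ ε * ‖b.repr v j • b j‖ := fun j => by
    by_cases hj : b j ∈ G
    · rw [real_inner_smul_right, abs_mul, norm_smul, Real.norm_eq_abs, mul_left_comm]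
      gcongr
      exact hx _ hj
    · rw [Finsupp.notMem_support_iff.1 fun h => hj (b.mem_span_image.1 (hbG ▸ hv) h)]
      simp
  calc |⟪x, v⟫| = |∑ j, ⟪x, b.repr v j • b j⟫| := by rw [← inner_sum, b.sum_repr]
    _ ≤ ∑ j, |⟪x, b.repr v j • b j⟫| := Finset.abs_sum_le_sum_abs _ _
    _ ≤ ∑ _j : ι, ε * (K * r ^ Fintype.card ι * ‖v‖) := by
        gcongr with j
        refine (hterm j).trans ?_
        gcongr
        exact hrepr r b (fun j => hTD _ (hbT j)) (fun j => hTr _ (hbT j)) v j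
    _ = Fintype.card ι * K * r ^ Fintype.card ι * ε * ‖v‖ := by
        rw [Finset.sum_const, Finset.card_univ, nsmul_eq_mul]
        ring

end SpanConstant

section LayerChains

variable {E : Type*} [NormedAddCommGroup E] [InnerProductSpace ℝ E]
  {S : Set E} {F L D ε : ℝ} {x y θ : E}

/-- The vectors `θ ∈ S` whose layer `{y : |y·θ| ≤ ε|θ|}` contains `x`. -/
def layerVectors (S : Set E) (ε : ℝ) (x : E) : Set E :=
  {θ ∈ S | |⟪x, θ⟫| ≤ ε * ‖θ‖}

/-- A step between two points of the layer of some `θ ∈ S` along `θ`. This weakens a step of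
resonant congruence: the layers are closed and the multiple of `θ` need not be an integer. -/
def LayerStep (S : Set E) (L : ℝ) (x y : E) : Prop :=
  ∃ θ, θ ∈ layerVectors S L x ∧ θ ∈ layerVectors S L y ∧ x - y ∈ ℝ ∙ θ

theorem LayerStep.symm (h : LayerStep S L x y) : LayerStep S L y x := by
  obtain ⟨θ, hx, hy, hxy⟩ := h
  exact ⟨θ, hy, hx, neg_sub x y ▸ neg_mem hxy⟩

theorem reflTransGen_layerStep_symm (h : ReflTransGen (LayerStep S L) x y) :
    ReflTransGen (LayerStep S L) y x :=
  have : Std.Symm (LayerStep S L) := ⟨fun _ _ => LayerStep.symm⟩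
  symm_of (ReflTransGen (LayerStep S L)) h

theorem sub_mem_span_of_reflTransGen_layerStep (h : ReflTransGen (LayerStep S L) x y) :
    x - y ∈ span ℝ S := by
  induction h with
  | refl => simp
  | tail _ hstep ih =>
    obtain ⟨θ, hθ, -, hsub⟩ := hstep
    rw [← sub_add_sub_cancel]
    exact add_mem ih (span_mono (singleton_subset_iff.2 hθ.1) hsub)

theorem mem_layerVectors_of_norm_sub_le (hθ : θ ∈ layerVectors S L y) (hxy : ‖x - y‖ ≤ D) :
    θ ∈ layerVectors S (L + D) x := by
  refine ⟨hθ.1, ?_⟩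
  calc |⟪x, θ⟫| = |⟪y, θ⟫ + ⟪x - y, θ⟫| := by rw [← inner_add_left, add_sub_cancel]
    _ ≤ |⟪y, θ⟫| + |⟪x - y, θ⟫| := abs_add_le _ _
    _ ≤ L * ‖θ‖ + D * ‖θ‖ := by
        gcongr
        · exact hθ.2
        · exact (abs_real_inner_le_norm _ _).trans (by gcongr)
    _ = (L + D) * ‖θ‖ := (add_mul _ _ _).symm

theorem reflTransGen_layerStep_layerVectors
    (hD : ∀ z, ReflTransGen (LayerStep (layerVectors S (L + D) x) L) x z → ‖x - z‖ ≤ D)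
    (h : ReflTransGen (LayerStep S L) x y) :
    ReflTransGen (LayerStep (layerVectors S (L + D) x) L) x y := by
  induction h with
  | refl => rfl
  | tail _ hstep ih =>
    obtain ⟨θ, hz, hy, hsub⟩ := hstep
    have hθ := mem_layerVectors_of_norm_sub_le hz (hD _ ih)
    exact ih.tail ⟨θ, ⟨hθ, hz.2⟩, ⟨hθ, hy.2⟩, hsub⟩

theorem norm_sub_le_of_abs_inner_le (hε : 0 ≤ ε) (hx : |⟪x, x - y⟫| ≤ ε * ‖x - y‖)
    (hy : |⟪y, x - y⟫| ≤ ε * ‖x - y‖) : ‖x - y‖ ≤ 2 * ε := by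
  rcases (norm_nonneg (x - y)).eq_or_lt with h0 | hpos
  · rw [← h0]
    positivity
  refine le_of_mul_le_mul_right ?_ hpos
  calc ‖x - y‖ * ‖x - y‖ = ⟪x, x - y⟫ - ⟪y, x - y⟫ := by
        rw [← inner_sub_left, real_inner_self_eq_norm_mul_norm]
    _ ≤ |⟪x, x - y⟫| + |⟪y, x - y⟫| := (le_abs_self _).trans (abs_sub _ _)
    _ ≤ 2 * ε * ‖x - y‖ := by linarith

variable [FiniteDimensional ℝ E]

theorem norm_sub_le_or_abs_inner_le {n : ℕ} (hSn : finrank ℝ (span ℝ S) ≤ n + 1)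
    (hS : HasSpanConstant S F) (hL : 0 ≤ L) (hD0 : 0 ≤ D)
    (hD : ∀ G ⊆ S, finrank ℝ (span ℝ G) ≤ n →
      ∀ x y, ReflTransGen (LayerStep G L) x y → ‖x - y‖ ≤ D)
    (h : ReflTransGen (LayerStep S L) x y) :
    ‖x - y‖ ≤ D ∨ ∀ v ∈ span ℝ S, |⟪x, v⟫| ≤ F * (L + D) * ‖v‖ := by
  have hsub : layerVectors S (L + D) x ⊆ S := sep_subset _ _
  rcases le_or_gt (finrank ℝ (span ℝ (layerVectors S (L + D) x))) n with hn | hn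
  · have hdiam := hD _ hsub hn x
    exact .inl (hdiam y (reflTransGen_layerStep_layerVectors hdiam h))
  · have hspan := eq_of_le_of_finrank_le (span_mono (R := ℝ) hsub) (hSn.trans hn)
    exact .inr fun v hv => hS _ hsub x _ (add_nonneg hL hD0) (fun θ hθ => hθ.2) v (hspan ▸ hv)

theorem norm_sub_le_of_finrank_span_le_succ {n : ℕ} (hSn : finrank ℝ (span ℝ S) ≤ n + 1)
    (hS : HasSpanConstant S F) (hF : 1 ≤ F) (hL : 0 ≤ L) (hD0 : 0 ≤ D)
    (hD : ∀ G ⊆ S, finrank ℝ (span ℝ G) ≤ n →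
      ∀ x y, ReflTransGen (LayerStep G L) x y → ‖x - y‖ ≤ D)
    (h : ReflTransGen (LayerStep S L) x y) : ‖x - y‖ ≤ 2 * (F * (L + D)) := by
  have hDF : D ≤ 2 * (F * (L + D)) := by
    have := le_mul_of_one_le_left (add_nonneg hL hD0) hF
    linarith
  rcases norm_sub_le_or_abs_inner_le hSn hS hL hD0 hD h with hxy | hx
  · exact hxy.trans hDF
  rcases norm_sub_le_or_abs_inner_le hSn hS hL hD0 hD (reflTransGen_layerStep_symm h) with hyx | hy
  · exact norm_sub_rev x y ▸ hyx.trans hDF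
  have hmem := sub_mem_span_of_reflTransGen_layerStep h
  exact norm_sub_le_of_abs_inner_le (by positivity) (hx _ hmem) (hy _ hmem)

theorem norm_sub_le_of_reflTransGen_layerStep {n : ℕ} (hn : finrank ℝ (span ℝ S) ≤ n + 1)
    (hS : HasSpanConstant S F) (hF : 1 ≤ F) (hL : 0 ≤ L)
    (h : ReflTransGen (LayerStep S L) x y) : ‖x - y‖ ≤ 2 * L * (4 * F) ^ n := by
  induction n generalizing S x y with
  | zero =>
    have hpoint : ∀ G ⊆ S, finrank ℝ (span ℝ G) ≤ 0 →
        ∀ x y, ReflTransGen (LayerStep G L) x y → ‖x - y‖ ≤ 0 := by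
      intro G _ hG x y hxy
      have hmem := sub_mem_span_of_reflTransGen_layerStep hxy
      rw [finrank_eq_zero.1 (Nat.le_zero.1 hG), mem_bot] at hmem
      rw [hmem, norm_zero]
    have hline := norm_sub_le_of_finrank_span_le_succ hn (.of_finrank_span_le_one hn) le_rfl hL
      le_rfl hpoint h
    simpa using hline
  | succ n ih =>
    have hFn : 1 ≤ (4 * F) ^ n := one_le_pow₀ (by linarith)
    calc ‖x - y‖ ≤ 2 * (F * (L + 2 * L * (4 * F) ^ n)) :=
          norm_sub_le_of_finrank_span_le_succ hn hS hF hL (by positivity)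
            (fun G hG hGn x y => ih hGn (hS.mono hG)) h
      _ ≤ 2 * (F * (2 * L * (4 * F) ^ n + 2 * L * (4 * F) ^ n)) := by
          gcongr
          nlinarith
      _ = 2 * L * (4 * F) ^ (n + 1) := by ring

end LayerChains

section DualLattice

theorem nondegenerate_innerₗ (E : Type*) [NormedAddCommGroup E] [InnerProductSpace ℝ E] :
    LinearMap.BilinForm.Nondegenerate (innerₗ E) :=
  ⟨fun x hx => inner_self_eq_zero.1 (hx x), fun x hx => inner_self_eq_zero.1 (hx x)⟩

theorem exists_basis_dualLattice_subset_span_int (B : Basis (Fin d) ℝ (EuclideanSpace ℝ (Fin d))) :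
    ∃ D : Basis (Fin d) ℝ (EuclideanSpace ℝ (Fin d)), dualLattice B ⊆ span ℤ (range D) := by
  have hπ : IsUnit (2 * Real.pi)⁻¹ := by
    rw [isUnit_iff_ne_zero]
    positivity
  refine ⟨LinearMap.BilinForm.dualBasis (innerₗ _) (nondegenerate_innerₗ _)
    (B.isUnitSMul fun _ => hπ), fun θ hθ => ?_⟩
  refine (Basis.mem_span_iff_repr_mem ℤ _ θ).2 fun i => ?_
  obtain ⟨k, hk⟩ := hθ (B i) (subset_span (mem_range_self i))
  refine ⟨k, ?_⟩
  rw [LinearMap.BilinForm.dualBasis_repr_apply, Basis.isUnitSMul_apply, innerₗ_apply_apply,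
    real_inner_smul_right, hk, inv_mul_cancel_left₀ (by positivity)]
  rfl

end DualLattice

section ResonantCongruence

variable {B : Basis (Fin d) ℝ (EuclideanSpace ℝ (Fin d))} {ρ a r F : ℝ}
  {ξ η θ m : EuclideanSpace ℝ (Fin d)}

theorem theta_nonempty_of_span_theta0_eq_top [NeZero d] (hr : span ℝ (Theta0 B r) = ⊤) :
    (Theta B r).Nonempty := by
  by_contra! h
  have hzero : ∀ θ ∈ Theta0 B r, θ = 0 := fun θ hθ => by
    by_contra hθ0
    exact h.subset ⟨hθ.1, hθ0, hθ.2⟩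
  exact bot_ne_top ((span_eq_bot.2 hzero).symm.trans hr)

theorem nonneg_of_span_theta0_eq_top [NeZero d] (hr : span ℝ (Theta0 B r) = ⊤) : 0 ≤ r := by
  obtain ⟨θ, hθ⟩ := theta_nonempty_of_span_theta0_eq_top hr
  exact (norm_nonneg θ).trans hθ.2.2

theorem exists_hasSpanConstant_theta0 [NeZero d]
    (B : Basis (Fin d) ℝ (EuclideanSpace ℝ (Fin d))) :
    ∃ F₀, 0 < F₀ ∧ ∀ r, span ℝ (Theta0 B r) = ⊤ →
      1 ≤ F₀ * r ^ d ∧ HasSpanConstant (Theta0 B r) (F₀ * r ^ d) := by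
  obtain ⟨D, hD⟩ := exists_basis_dualLattice_subset_span_int B
  obtain ⟨F₀, hF₀, hspan⟩ := exists_hasSpanConstant_of_subset_span_int D
  refine ⟨F₀, hF₀, fun r hr => ?_⟩
  have hF := hspan r (Theta0 B r) (fun θ hθ => hD hθ.1) (fun θ hθ => hθ.2) hr
  rw [Fintype.card_fin] at hF
  obtain ⟨θ, hθ, hθ0, hθr⟩ := theta_nonempty_of_span_theta0_eq_top hr
  exact ⟨hF.one_le ⟨hθ, hθr⟩ hθ0, hF⟩

theorem mem_layerVectors_of_mem_layer (hθ : θ ∈ Theta0 B r) (hξ : ξ ∈ layer ρ a θ) :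
    θ ∈ layerVectors (Theta0 B r) (ρ ^ a) ξ := by
  refine ⟨hθ, ?_⟩
  rcases hξ with rfl | hlt
  · simp
  · exact hlt.le

theorem layerStep_of_resStep (h : resStep B ρ a r ξ η) :
    LayerStep (Theta0 B r) (ρ ^ a) ξ η := by
  obtain ⟨θ, hθ, hξ, hη, l, hl⟩ := h
  exact ⟨θ, mem_layerVectors_of_mem_layer hθ hξ, mem_layerVectors_of_mem_layer hθ hη,
    mem_span_singleton.2 ⟨l, hl.symm⟩⟩

theorem norm_sub_le_of_mem_ups (hρ : 0 ≤ ρ) (hS : HasSpanConstant (Theta0 B r) F) (hF : 1 ≤ F)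
    (hη : η ∈ Ups B ρ a r ξ) : ‖ξ - η‖ ≤ 2 * ρ ^ a * (4 * F) ^ (d - 1) := by
  have hrank : finrank ℝ (span ℝ (Theta0 B r)) ≤ d - 1 + 1 :=
    (finrank_le _).trans (by rw [finrank_euclideanSpace_fin]; omega)
  exact norm_sub_le_of_reflTransGen_layerStep hrank hS hF (Real.rpow_nonneg hρ a)
    (ReflTransGen.mono (fun _ _ => layerStep_of_resStep) _ _ hη)

theorem sub_mem_span_int_theta0_of_mem_ups (hη : η ∈ Ups B ρ a r ξ) :
    ξ - η ∈ span ℤ (Theta0 B r) := by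
  induction hη with
  | refl => simp
  | tail _ hstep ih =>
    obtain ⟨θ, hθ, -, -, l, hl⟩ := hstep
    rw [← sub_add_sub_cancel, hl, Int.cast_smul_eq_zsmul]
    exact add_mem ih (smul_mem _ l (subset_span hθ))

theorem norm_le_of_mem_resN {R : ℝ} (hR : ∀ η ∈ Ups B ρ a r ξ, ‖ξ - η‖ ≤ R)
    (hm : m ∈ resN B ρ a r ξ) : ‖m‖ ≤ R := by
  simpa using hR _ hm

theorem mem_span_int_theta0_of_mem_resN (hm : m ∈ resN B ρ a r ξ) : m ∈ span ℤ (Theta0 B r) := by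
  simpa using sub_mem_span_int_theta0_of_mem_ups hm

theorem exists_ncard_resN_le (B : Basis (Fin d) ℝ (EuclideanSpace ℝ (Fin d))) :
    ∃ K : ℝ, ∀ ρ r a ξ (R : ℝ), 1 ≤ R → (∀ η ∈ Ups B ρ a r ξ, ‖ξ - η‖ ≤ R) →
      (resN B ρ a r ξ).Finite ∧ ((resN B ρ a r ξ).ncard : ℝ) ≤ K * R ^ d := by
  obtain ⟨D, hD⟩ := exists_basis_dualLattice_subset_span_int B
  obtain ⟨K, hcard⟩ := exists_ncard_le_of_subset_span_int D
  rw [Fintype.card_fin] at hcard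
  exact ⟨K, fun ρ r a ξ R hR hdiam => hcard R hR _
    (fun m hm => span_le.2 (fun θ hθ => hD hθ.1) (mem_span_int_theta0_of_mem_resN hm))
    (fun m hm => norm_le_of_mem_resN hdiam hm)⟩

theorem mul_rpow_mul_pow_pow (c a r : ℝ) {ρ : ℝ} (hρ : 0 ≤ ρ) (d k : ℕ) :
    (c * ρ ^ a * r ^ k) ^ d = c ^ d * ρ ^ ((d : ℝ) * a) * r ^ (k * d) := by
  rw [mul_pow, mul_pow, ← pow_mul, mul_comm (d : ℝ), Real.rpow_mul hρ, Real.rpow_natCast]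

theorem exists_ups_diam_le [NeZero d] (B : Basis (Fin d) ℝ (EuclideanSpace ℝ (Fin d))) :
    ∃ C, 0 < C ∧ ∀ ρ r a : ℝ, 1 ≤ ρ → 0 ≤ a → span ℝ (Theta0 B r) = ⊤ →
      1 ≤ C * ρ ^ a * r ^ (d * (d - 1)) ∧
        ∀ ξ, ∀ η ∈ Ups B ρ a r ξ, ‖ξ - η‖ ≤ C * ρ ^ a * r ^ (d * (d - 1)) := by
  obtain ⟨F₀, hF₀, hspan⟩ := exists_hasSpanConstant_theta0 B
  refine ⟨2 * (4 * F₀) ^ (d - 1), by positivity, fun ρ r a hρ ha hr => ?_⟩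
  obtain ⟨hF, hS⟩ := hspan r hr
  have heq : 2 * (4 * F₀) ^ (d - 1) * ρ ^ a * r ^ (d * (d - 1)) =
      2 * ρ ^ a * (4 * (F₀ * r ^ d)) ^ (d - 1) := by
    rw [pow_mul, ← mul_assoc 4, mul_pow (4 * F₀)]
    ring
  rw [heq]
  refine ⟨?_, fun ξ η hη => norm_sub_le_of_mem_ups (by linarith) hS hF hη⟩
  refine one_le_mul_of_one_le_of_one_le ?_ (one_le_pow₀ (by linarith))
  linarith [Real.one_le_rpow hρ ha]

theorem GoodParams.alpha_one_nonneg {κ : ℝ} {α : ℕ → ℝ} (h : GoodParams B ρ r κ α) (hd : 0 < d) :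
    0 ≤ α 1 := by
  obtain ⟨-, hκ, hα0, hα, -⟩ := h
  calc 0 ≤ α 0 + 2 * κ * (d : ℝ) ^ 2 := by rw [hα0]; positivity
    _ ≤ α 1 := (hα 0 hd).le

end ResonantCongruence

theorem ups_diam_and_card_bound_general
    (d : ℕ) (hd : 0 < d) (B : Basis (Fin d) ℝ (EuclideanSpace ℝ (Fin d))) :
    ∃ C : ℝ, 0 < C ∧ ∀ ρ r a : ℝ, 1 ≤ ρ → 0 ≤ a → span ℝ (Theta0 B r) = ⊤ →
      ∀ ξ : EuclideanSpace ℝ (Fin d),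
        (∀ η ∈ Ups B ρ a r ξ, ‖ξ - η‖ ≤ C * ρ ^ a * r ^ ((d - 1) * d)) ∧
        (∀ m ∈ resN B ρ a r ξ, ‖m‖ ≤ C * ρ ^ a * r ^ (d * (d - 1))) ∧
        (resN B ρ a r ξ).Finite ∧
        ((resN B ρ a r ξ).ncard : ℝ) ≤ C * ρ ^ ((d : ℝ) * a) * r ^ (d ^ 2 * (d - 1)) := by
  have : NeZero d := ⟨hd.ne'⟩
  obtain ⟨C, hC, hdiam⟩ := exists_ups_diam_le B
  obtain ⟨K, hcard⟩ := exists_ncard_resN_le B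
  refine ⟨max C (K * C ^ d), lt_max_of_lt_left hC, fun ρ r a hρ ha hr ξ => ?_⟩
  obtain ⟨hR, hdiam⟩ := hdiam ρ r a hρ ha hr
  have hr0 := nonneg_of_span_theta0_eq_top hr
  have hC' : C * ρ ^ a * r ^ (d * (d - 1)) ≤ max C (K * C ^ d) * ρ ^ a * r ^ (d * (d - 1)) := by
    gcongr
    exact le_max_left _ _
  obtain ⟨hfin, hncard⟩ := hcard ρ r a ξ _ hR (hdiam ξ)
  refine ⟨fun η hη => ?_, fun m hm => (norm_le_of_mem_resN (hdiam ξ) hm).trans hC', hfin, ?_⟩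
  · rw [mul_comm (d - 1) d]
    exact (hdiam ξ η hη).trans hC'
  · calc ((resN B ρ a r ξ).ncard : ℝ) ≤ K * (C * ρ ^ a * r ^ (d * (d - 1))) ^ d := hncard
      _ = K * C ^ d * ρ ^ ((d : ℝ) * a) * r ^ (d ^ 2 * (d - 1)) := by
        rw [mul_rpow_mul_pow_pow C a r (by linarith), mul_right_comm d, ← sq]
        ring
      _ ≤ _ := by
        gcongr
        exact le_max_right _ _

/-- Lemma 5.5: there is C = C(d,Γ) > 0 such that, under the standing
parameter conditions, for every ξ: (i) |ξ − η| ≤ C ρ^{α₁} r^{(d−1)d} for all η ∈ Υ(ξ);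
(ii) |m| ≤ C ρ^{α₁} r^{d(d−1)} for all m ∈ N(ξ); (iii) N(ξ) is finite with
card N(ξ) ≤ C ρ^{dα₁} r^{d²(d−1)}. -/
theorem ups_diam_and_card_bound
    (d : ℕ) (hd : 2 ≤ d) (B : Basis (Fin d) ℝ (EuclideanSpace ℝ (Fin d))) :
    ∃ C : ℝ, 0 < C ∧ ∀ (ρ r κ : ℝ) (α : ℕ → ℝ), GoodParams B ρ r κ α →
      ∀ ξ : EuclideanSpace ℝ (Fin d),
        (∀ η ∈ Ups B ρ (α 1) r ξ, ‖ξ - η‖ ≤ C * ρ ^ α 1 * r ^ ((d - 1) * d)) ∧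
        (∀ m ∈ resN B ρ (α 1) r ξ, ‖m‖ ≤ C * ρ ^ α 1 * r ^ (d * (d - 1))) ∧
        (resN B ρ (α 1) r ξ).Finite ∧
        ((resN B ρ (α 1) r ξ).ncard : ℝ) ≤ C * ρ ^ ((d : ℝ) * α 1) * r ^ (d ^ 2 * (d - 1)) := by
  obtain ⟨C, hC, hbound⟩ := ups_diam_and_card_bound_general d (by omega) B
  exact ⟨C, hC, fun ρ r κ α h =>
    hbound ρ r (α 1) h.1 (h.alpha_one_nonneg (by omega)) h.2.2.2.2.2.2⟩
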